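/- arXiv:1004.5192 — 4 statements merged into one kernel-verified Lean document; each statement's English description precedes it below -/
import Mathlib

section
/- Let 𝒳 be a convex test class and U an 𝒳-consistent stochastic utility such that the partial derivative U_x(t,x) = ∂U/∂x exists and is continuous. Fix s ≥ 0 and s-attainable wealths η, η' > 0, let X*(s,η) ∈ 𝒳(s,η) be the optimal wealth process for U started from η at time s, and let X(s,η') ∈ 𝒳(s,η') be any test portfolio (with the processes below integrable). Then the process ((X_t(s,η') − X*_t(s,η)) · U_x(t, X*_t(s,η)))_{t ≥ s} is a supermartingale. -/
open MeasureTheory Set Filter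

variable {Ω : Type*}

/-- A process `f` is adapted, integrable and a martingale on the time interval `[s, ∞)`. -/
def IsMartingaleOn {m0 : MeasurableSpace Ω} (𝓕 : Filtration ℝ m0) (μ : Measure Ω)
    (f : ℝ → Ω → ℝ) (s : ℝ) : Prop :=
  (∀ t, s ≤ t → StronglyMeasurable[𝓕 t] (f t)) ∧
  (∀ t, s ≤ t → Integrable (f t) μ) ∧
  ∀ t₁ t₂, s ≤ t₁ → t₁ ≤ t₂ → μ[f t₂|𝓕 t₁] =ᵐ[μ] f t₁

/-- A process `f` is adapted, integrable and a supermartingale on the time interval `[s, ∞)`. -/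
def IsSupermartingaleOn {m0 : MeasurableSpace Ω} (𝓕 : Filtration ℝ m0) (μ : Measure Ω)
    (f : ℝ → Ω → ℝ) (s : ℝ) : Prop :=
  (∀ t, s ≤ t → StronglyMeasurable[𝓕 t] (f t)) ∧
  (∀ t, s ≤ t → Integrable (f t) μ) ∧
  ∀ t₁ t₂, s ≤ t₁ → t₁ ≤ t₂ → μ[f t₂|𝓕 t₁] ≤ᵐ[μ] f t₁

/-- A process `f` is adapted, integrable and a submartingale on the time interval `[s, ∞)`. -/
def IsSubmartingaleOn {m0 : MeasurableSpace Ω} (𝓕 : Filtration ℝ m0) (μ : Measure Ω)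
    (f : ℝ → Ω → ℝ) (s : ℝ) : Prop :=
  (∀ t, s ≤ t → StronglyMeasurable[𝓕 t] (f t)) ∧
  (∀ t, s ≤ t → Integrable (f t) μ) ∧
  ∀ t₁ t₂, s ≤ t₁ → t₁ ≤ t₂ → f t₁ ≤ᵐ[μ] μ[f t₂|𝓕 t₁]

/-- Test portfolios from the class `𝒳` starting from `η` at time `s`. -/
def classAt (𝒳 : Set (ℝ → Ω → ℝ)) (s : ℝ) (η : Ω → ℝ) : Set (ℝ → Ω → ℝ) :=
  {X | X ∈ 𝒳 ∧ X s = η}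

/-- `η` is `s`-attainable if some test portfolio starts from `η` at time `s`. -/
def Attainable (𝒳 : Set (ℝ → Ω → ℝ)) (s : ℝ) (η : Ω → ℝ) : Prop :=
  (classAt 𝒳 s η).Nonempty

/-- Convexity of the test class: `ε·𝒳(s,η) + (1-ε)·𝒳(s,η') ⊆ 𝒳(s, εη + (1-ε)η')`. -/
def ConvexClass (𝒳 : Set (ℝ → Ω → ℝ)) : Prop :=
  ∀ s : ℝ, ∀ ε : ℝ, ε ∈ Icc (0:ℝ) 1 → ∀ η η' : Ω → ℝ,
    ∀ X ∈ classAt 𝒳 s η, ∀ X' ∈ classAt 𝒳 s η',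
      (fun t ω => ε * X t ω + (1 - ε) * X' t ω)
        ∈ classAt 𝒳 s (fun ω => ε * η ω + (1 - ε) * η' ω)

/-- Homogeneity of the test class: `λ·𝒳 ⊆ 𝒳` for every `λ > 0`. -/
def HomogeneousClass (𝒳 : Set (ℝ → Ω → ℝ)) : Prop :=
  ∀ lam : ℝ, 0 < lam → ∀ X ∈ 𝒳, (fun t ω => lam * X t ω) ∈ 𝒳

/-- `U` is an `𝒳`-consistent stochastic utility. -/
def IsConsistentUtility {m0 : MeasurableSpace Ω} (𝓕 : Filtration ℝ m0) (μ : Measure Ω)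
    (𝒳 : Set (ℝ → Ω → ℝ)) (U : ℝ → ℝ → Ω → ℝ) : Prop :=
  (∀ t x, StronglyMeasurable[𝓕 t] (U t x)) ∧
  (∀ t : ℝ, ∀ᵐ ω ∂μ, (∀ x, 0 < x → 0 < U t x ω) ∧
      StrictMonoOn (fun x => U t x ω) (Ioi 0) ∧
      StrictConcaveOn ℝ (Ioi 0) (fun x => U t x ω)) ∧
  (∀ s : ℝ, 0 ≤ s → ∀ η : Ω → ℝ, ∀ X ∈ classAt 𝒳 s η,
      IsSupermartingaleOn 𝓕 μ (fun t ω => U t (X t ω) ω) s) ∧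
  (∀ s : ℝ, 0 ≤ s → ∀ η : Ω → ℝ, Attainable 𝒳 s η →
      ∃ Xs ∈ classAt 𝒳 s η, IsMartingaleOn 𝓕 μ (fun t ω => U t (Xs t ω) ω) s)

/-!
Shift a fraction `ε` of the optimal portfolio `X*` into the test portfolio `X`. By convexity of the
test class the shifted wealth `X* + ε(X - X*)` is again a test portfolio, so the difference quotient
`ε⁻¹ (U(t, X*_t + ε(X_t - X*_t)) - U(t, X*_t))` is a supermartingale minus a martingale. As `ε ↓ 0`
it tends to `(X_t - X*_t) U_x(t, X*_t)`, and by concavity it increases to this limit, hence lies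
between its value at `ε = 1` and the limit. Both bounds are integrable, so dominated convergence
under conditional expectation preserves the supermartingale inequality.
-/

section CondExp

open scoped Topology ENNReal

variable {α E : Type*} {m m0 : MeasurableSpace α} {μ : Measure α}
  [NormedAddCommGroup E] [NormedSpace ℝ E] [CompleteSpace E] {f g : α → E}

lemma tendstoInMeasure_condExp_of_tendsto_eLpNorm {ι : Type*} {l : Filter ι} {p : ℝ≥0∞}
    {fs : ι → α → E} (hp : 1 ≤ p) (hfs : ∀ i, Integrable (fs i) μ) (hf : Integrable f μ)
    (hlim : Tendsto (fun i ↦ eLpNorm (fs i - f) p μ) l (𝓝 0)) :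
    TendstoInMeasure μ (fun i ↦ μ[fs i | m]) l μ[f | m] := by
  have hcontract : ∀ i, eLpNorm (μ[fs i | m] - μ[f | m]) p μ ≤ eLpNorm (fs i - f) p μ := fun i ↦
    calc eLpNorm (μ[fs i | m] - μ[f | m]) p μ
        = eLpNorm μ[fs i - f | m] p μ := eLpNorm_congr_ae (condExp_sub (hfs i) hf m).symm
      _ ≤ eLpNorm (fs i - f) p μ := eLpNorm_condExp_le_eLpNorm _ hp
  exact tendstoInMeasure_of_tendsto_eLpNorm (zero_lt_one.trans_le hp).ne'
    (fun i ↦ integrable_condExp.aestronglyMeasurable) integrable_condExp.aestronglyMeasurable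
    (tendsto_of_tendsto_of_tendsto_of_le_of_le tendsto_const_nhds hlim (fun _ ↦ zero_le) hcontract)

lemma condExp_ae_le_of_tendsto_of_dominated [PartialOrder E] [OrderClosedTopology E]
    {fs gs : ℕ → α → E} {bound : α → ℝ}
    (hfs : ∀ n, AEStronglyMeasurable (fs n) μ) (hbound : Integrable bound μ)
    (hfs_bound : ∀ n, ∀ᵐ x ∂μ, ‖fs n x‖ ≤ bound x)
    (hfs_lim : ∀ᵐ x ∂μ, Tendsto (fun n ↦ fs n x) atTop (𝓝 (f x)))
    (hgs_lim : ∀ᵐ x ∂μ, Tendsto (fun n ↦ gs n x) atTop (𝓝 (g x)))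
    (hle : ∀ n, μ[fs n | m] ≤ᵐ[μ] gs n) :
    μ[f | m] ≤ᵐ[μ] g := by
  have hf : Integrable f μ := ⟨aestronglyMeasurable_of_tendsto_ae atTop hfs hfs_lim,
    hasFiniteIntegral_of_dominated_convergence hbound.hasFiniteIntegral hfs_bound hfs_lim⟩
  have hlim : Tendsto (fun n ↦ eLpNorm (fs n - f) 1 μ) atTop (𝓝 0) := by
    simpa only [eLpNorm_one_eq_lintegral_enorm, Pi.sub_apply, ofReal_norm] using
      tendsto_lintegral_norm_of_dominated_convergence hfs hbound.hasFiniteIntegral hfs_bound hfs_lim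
  obtain ⟨ns, hns, hns_lim⟩ := (tendstoInMeasure_condExp_of_tendsto_eLpNorm (m := m) le_rfl
    (fun n ↦ hbound.mono' (hfs n) (hfs_bound n)) hf hlim).exists_seq_tendsto_ae
  filter_upwards [hns_lim, hgs_lim, ae_all_iff.2 hle] with x hfx hgx hle_x
  exact le_of_tendsto_of_tendsto' hfx (hgx.comp hns.tendsto_atTop) fun i ↦ hle_x (ns i)

end CondExp

namespace IsSupermartingaleOn

open scoped Topology

variable {m0 : MeasurableSpace Ω} {𝓕 : Filtration ℝ m0} {μ : Measure Ω} {f g : ℝ → Ω → ℝ} {s : ℝ}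

lemma sub_martingale (hf : IsSupermartingaleOn 𝓕 μ f s) (hg : IsMartingaleOn 𝓕 μ g s) :
    IsSupermartingaleOn 𝓕 μ (f - g) s := by
  obtain ⟨hf_meas, hf_int, hf_le⟩ := hf
  obtain ⟨hg_meas, hg_int, hg_eq⟩ := hg
  refine ⟨fun t ht ↦ (hf_meas t ht).sub (hg_meas t ht), fun t ht ↦ (hf_int t ht).sub (hg_int t ht),
    fun t₁ t₂ hs h₁₂ ↦ ?_⟩
  have ht₂ := hs.trans h₁₂
  refine (condExp_sub (hf_int t₂ ht₂) (hg_int t₂ ht₂) _).trans_le ?_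
  filter_upwards [hf_le t₁ t₂ hs h₁₂, hg_eq t₁ t₂ hs h₁₂] with ω hfω hgω
  exact sub_le_sub hfω hgω.ge

lemma const_smul {c : ℝ} (hf : IsSupermartingaleOn 𝓕 μ f s) (hc : 0 ≤ c) :
    IsSupermartingaleOn 𝓕 μ (c • f) s := by
  obtain ⟨hf_meas, hf_int, hf_le⟩ := hf
  refine ⟨fun t ht ↦ (hf_meas t ht).const_smul c, fun t ht ↦ (hf_int t ht).smul c,
    fun t₁ t₂ hs h₁₂ ↦ (condExp_smul c (f t₂) _).trans_le ?_⟩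
  filter_upwards [hf_le t₁ t₂ hs h₁₂] with ω hω
  exact smul_le_smul_of_nonneg_left hω hc

lemma of_tendsto_of_dominated {fs : ℕ → ℝ → Ω → ℝ} {bound : ℝ → Ω → ℝ}
    (hfs : ∀ n, IsSupermartingaleOn 𝓕 μ (fs n) s)
    (hbound : ∀ t, s ≤ t → Integrable (bound t) μ)
    (hfs_bound : ∀ n t, s ≤ t → ∀ᵐ ω ∂μ, ‖fs n t ω‖ ≤ bound t ω)
    (hlim : ∀ t, s ≤ t → ∀ ω, Tendsto (fun n ↦ fs n t ω) atTop (𝓝 (f t ω))) :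
    IsSupermartingaleOn 𝓕 μ f s := by
  have hf_meas : ∀ t, s ≤ t → StronglyMeasurable[𝓕 t] (f t) := fun t ht ↦
    stronglyMeasurable_of_tendsto atTop (fun n ↦ (hfs n).1 t ht) (tendsto_pi_nhds.2 (hlim t ht))
  have hf_int : ∀ t, s ≤ t → Integrable (f t) μ := fun t ht ↦
    ⟨((hf_meas t ht).mono (𝓕.le t)).aestronglyMeasurable,
      hasFiniteIntegral_of_dominated_convergence (hbound t ht).hasFiniteIntegral
        (fun n ↦ hfs_bound n t ht) (ae_of_all μ (hlim t ht))⟩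
  refine ⟨hf_meas, hf_int, fun t₁ t₂ hs h₁₂ ↦ ?_⟩
  have ht₂ := hs.trans h₁₂
  exact condExp_ae_le_of_tendsto_of_dominated (fun n ↦ ((hfs n).2.1 t₂ ht₂).aestronglyMeasurable)
    (hbound t₂ ht₂) (fun n ↦ hfs_bound n t₂ ht₂) (ae_of_all μ (hlim t₂ ht₂))
    (ae_of_all μ (hlim t₁ hs)) fun n ↦ (hfs n).2.2 t₁ t₂ hs h₁₂

end IsSupermartingaleOn

lemma abs_slope_le_max_of_concaveOn {S : Set ℝ} {f : ℝ → ℝ} {f' x y z : ℝ} (hf : ConcaveOn ℝ S f)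
    (hx : x ∈ S) (hy : y ∈ S) (hz : z ∈ S) (hxy : x < y) (hyz : y ≤ z) (hf' : HasDerivAt f f' x) :
    |slope f x y| ≤ max |slope f x z| |f'| :=
  abs_le_max_abs_abs
    (hf.slope_anti hx ⟨hy, hxy.ne'⟩ ⟨hz, (hxy.trans_le hyz).ne'⟩ hyz)
    (hf.slope_le_of_hasDerivAt hx hy hxy hf')

lemma concaveOn_comp_lineMap {𝕜 E β : Type*} [Field 𝕜] [LinearOrder 𝕜] [IsStrictOrderedRing 𝕜]
    [AddCommGroup E] [Module 𝕜 E] [AddCommMonoid β] [PartialOrder β] [SMul 𝕜 β] {f : E → β}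
    {x y : E} (hf : ConcaveOn 𝕜 (segment 𝕜 x y) f) :
    ConcaveOn 𝕜 (Icc 0 1) (fun ε : 𝕜 ↦ f (AffineMap.lineMap x y ε)) :=
  (hf.comp_affineMap (AffineMap.lineMap x y)).subset
    (fun _ hε ↦ lineMap_mem_segment 𝕜 x y hε) (convex_Icc 0 1)

lemma hasDerivAt_comp_lineMap_zero {𝕜 F : Type*} [NontriviallyNormedField 𝕜]
    [NormedAddCommGroup F] [NormedSpace 𝕜 F] {f : 𝕜 → F} {f' : F} {x : 𝕜} (hf : HasDerivAt f f' x)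
    (y : 𝕜) : HasDerivAt (fun ε : 𝕜 ↦ f (AffineMap.lineMap x y ε)) ((y - x) • f') 0 :=
  HasDerivAt.scomp 0 (by rwa [AffineMap.lineMap_apply_zero]) AffineMap.hasDerivAt_lineMap

lemma ConvexClass.lineMap_mem_classAt {𝒳 : Set (ℝ → Ω → ℝ)} (h𝒳 : ConvexClass 𝒳) {s ε : ℝ}
    (hε : ε ∈ Icc (0 : ℝ) 1) {η η' : Ω → ℝ} {X X' : ℝ → Ω → ℝ} (hX : X ∈ classAt 𝒳 s η)
    (hX' : X' ∈ classAt 𝒳 s η') :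
    (fun t ω ↦ AffineMap.lineMap (X t ω) (X' t ω) ε) ∈
      classAt 𝒳 s (fun ω ↦ AffineMap.lineMap (η ω) (η' ω) ε) := by
  simpa only [AffineMap.lineMap_apply_ring, add_comm] using h𝒳 s ε hε η' η X' hX' X hX

namespace IsConsistentUtility

variable {m0 : MeasurableSpace Ω} {𝓕 : Filtration ℝ m0} {μ : Measure Ω} {𝒳 : Set (ℝ → Ω → ℝ)}
  {U : ℝ → ℝ → Ω → ℝ} {X X' : ℝ → Ω → ℝ}

lemma ae_concaveOn_segment (hU : IsConsistentUtility 𝓕 μ 𝒳 U) {x x' : Ω → ℝ} (hx : ∀ ω, 0 < x ω)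
    (hx' : ∀ ω, 0 < x' ω) (t : ℝ) :
    ∀ᵐ ω ∂μ, ConcaveOn ℝ (segment ℝ (x ω) (x' ω)) (fun y ↦ U t y ω) := by
  filter_upwards [hU.2.1 t] with ω ⟨_, _, hconc⟩
  exact hconc.concaveOn.subset ((convex_Ioi 0).segment_subset (hx ω) (hx' ω)) (convex_segment _ _)

lemma isSupermartingaleOn_lineMap (hU : IsConsistentUtility 𝓕 μ 𝒳 U) (h𝒳 : ConvexClass 𝒳)
    {s ε : ℝ} (hs : 0 ≤ s) (hε : ε ∈ Icc (0 : ℝ) 1) {η η' : Ω → ℝ} (hX : X ∈ classAt 𝒳 s η)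
    (hX' : X' ∈ classAt 𝒳 s η') :
    IsSupermartingaleOn 𝓕 μ (fun t ω ↦ U t (AffineMap.lineMap (X t ω) (X' t ω) ε) ω) s :=
  hU.2.2.1 s hs _ _ (h𝒳.lineMap_mem_classAt hε hX hX')

end IsConsistentUtility

/-- The rate at which utility is gained when a fraction `ε` of the portfolio `X` is shifted into
`X'`: the difference quotient between `0` and `ε` of `δ ↦ U(t, X_t + δ(X'_t - X_t))`. -/
noncomputable def utilityGainRate (U : ℝ → ℝ → Ω → ℝ) (X X' : ℝ → Ω → ℝ) (ε : ℝ) : ℝ → Ω → ℝ :=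
  fun t ω ↦ slope (fun δ ↦ U t (AffineMap.lineMap (X t ω) (X' t ω) δ) ω) 0 ε

section UtilityGainRate

open scoped Topology

variable {m0 : MeasurableSpace Ω} {𝓕 : Filtration ℝ m0} {μ : Measure Ω} {U : ℝ → ℝ → Ω → ℝ}
  {X X' : ℝ → Ω → ℝ} {s : ℝ}

lemma isSupermartingaleOn_utilityGainRate {ε : ℝ} (hε : 0 ≤ ε)
    (hsuper : IsSupermartingaleOn 𝓕 μ
      (fun t ω ↦ U t (AffineMap.lineMap (X t ω) (X' t ω) ε) ω) s)
    (hmart : IsMartingaleOn 𝓕 μ (fun t ω ↦ U t (X t ω) ω) s) :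
    IsSupermartingaleOn 𝓕 μ (utilityGainRate U X X' ε) s := by
  have hquot : utilityGainRate U X X' ε = ε⁻¹ •
      ((fun t ω ↦ U t (AffineMap.lineMap (X t ω) (X' t ω) ε) ω) - fun t ω ↦ U t (X t ω) ω) := by
    funext t ω
    simp only [utilityGainRate, slope_def_module, sub_zero, AffineMap.lineMap_apply_zero,
      Pi.smul_apply, Pi.sub_apply]
  rw [hquot]
  exact (hsuper.sub_martingale hmart).const_smul (inv_nonneg.2 hε)

lemma abs_utilityGainRate_le {t ε u : ℝ} {ω : Ω} (hε : ε ∈ Ioc (0 : ℝ) 1)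
    (hconc : ConcaveOn ℝ (segment ℝ (X t ω) (X' t ω)) (fun x ↦ U t x ω))
    (hderiv : HasDerivAt (fun x ↦ U t x ω) u (X t ω)) :
    |utilityGainRate U X X' ε t ω| ≤
      max |utilityGainRate U X X' 1 t ω| |(X' t ω - X t ω) * u| :=
  abs_slope_le_max_of_concaveOn (concaveOn_comp_lineMap hconc) (left_mem_Icc.2 zero_le_one)
    (Ioc_subset_Icc_self hε) (right_mem_Icc.2 zero_le_one) hε.1 hε.2
    (hasDerivAt_comp_lineMap_zero hderiv (X' t ω))

lemma tendsto_utilityGainRate {t u : ℝ} {ω : Ω}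
    (hderiv : HasDerivAt (fun x ↦ U t x ω) u (X t ω)) :
    Tendsto (fun ε ↦ utilityGainRate U X X' ε t ω) (𝓝[≠] 0) (𝓝 ((X' t ω - X t ω) * u)) :=
  hasDerivAt_iff_tendsto_slope.1 (hasDerivAt_comp_lineMap_zero hderiv (X' t ω))

theorem statement0_general {u : ℝ → Ω → ℝ}
    (hconc : ∀ t, s ≤ t → ∀ᵐ ω ∂μ,
      ConcaveOn ℝ (segment ℝ (X t ω) (X' t ω)) (fun x ↦ U t x ω))
    (hderiv : ∀ t, s ≤ t → ∀ ω, HasDerivAt (fun x ↦ U t x ω) (u t ω) (X t ω))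
    (hmart : IsMartingaleOn 𝓕 μ (fun t ω ↦ U t (X t ω) ω) s)
    (hsuper : ∀ ε ∈ Ioc (0 : ℝ) 1, IsSupermartingaleOn 𝓕 μ
      (fun t ω ↦ U t (AffineMap.lineMap (X t ω) (X' t ω) ε) ω) s)
    (hint : ∀ t, s ≤ t → Integrable (fun ω ↦ (X' t ω - X t ω) * u t ω) μ) :
    IsSupermartingaleOn 𝓕 μ (fun t ω ↦ (X' t ω - X t ω) * u t ω) s := by
  have hgain : ∀ ε ∈ Ioc (0 : ℝ) 1, IsSupermartingaleOn 𝓕 μ (utilityGainRate U X X' ε) s :=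
    fun ε hε ↦ isSupermartingaleOn_utilityGainRate hε.1.le (hsuper ε hε) hmart
  obtain ⟨ε, -, hε, hε_lim⟩ := exists_seq_strictAnti_tendsto' (zero_lt_one' ℝ)
  have hε_punctured : Tendsto ε atTop (𝓝[≠] 0) :=
    tendsto_nhdsWithin_iff.2 ⟨hε_lim, Eventually.of_forall fun n ↦ (hε n).1.ne'⟩
  refine .of_tendsto_of_dominated (fun n ↦ hgain (ε n) (Ioo_subset_Ioc_self (hε n)))
    (fun t ht ↦ ((hgain 1 (right_mem_Ioc.2 zero_lt_one)).2.1 t ht).abs.sup (hint t ht).abs)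
    (fun n t ht ↦ ?_)
    (fun t ht ω ↦ (tendsto_utilityGainRate (hderiv t ht ω)).comp hε_punctured)
  filter_upwards [hconc t ht] with ω hω
  exact abs_utilityGainRate_le (Ioo_subset_Ioc_self (hε n)) hω (hderiv t ht ω)

end UtilityGainRate

/-- for a convex test class `𝒳` and an `𝒳`-consistent utility `U` with continuous
partial derivative `Ux`, for `s`-attainable `η, η' > 0`, an optimal portfolio `X*(s,η)` and any
test portfolio `X(s,η')`, the process `((X_t(s,η') - X*_t(s,η)) · Ux(t, X*_t(s,η)))_{t ≥ s}`
is a supermartingale. -/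
theorem statement0 {m0 : MeasurableSpace Ω} (𝓕 : Filtration ℝ m0) (μ : Measure Ω)
    (h0 : ∀ A : Set Ω, MeasurableSet[𝓕 0] A → μ A = 0 ∨ μ Aᶜ = 0)
    (𝒳 : Set (ℝ → Ω → ℝ))
    (h𝒳 : ∀ X ∈ 𝒳, (∀ t ω, 0 < X t ω) ∧ ∀ t, StronglyMeasurable[𝓕 t] (X t))
    (h𝒳conv : ConvexClass 𝒳)
    (U Ux : ℝ → ℝ → Ω → ℝ)
    (hU : IsConsistentUtility 𝓕 μ 𝒳 U)
    (hUx : ∀ t x ω, 0 < x → HasDerivAt (fun y => U t y ω) (Ux t x ω) x)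
    (hUxcont : ∀ t ω, ContinuousOn (fun x => Ux t x ω) (Ioi 0))
    (s : ℝ) (hs : 0 ≤ s)
    (η η' : Ω → ℝ) (hη : ∀ ω, 0 < η ω) (hη' : ∀ ω, 0 < η' ω)
    (hηmeas : StronglyMeasurable[𝓕 s] η) (hη'meas : StronglyMeasurable[𝓕 s] η')
    -- `X*(s,η)` is the optimal wealth process of `U` started from `η` at time `s`
    (Xstar : ℝ → Ω → ℝ) (hXstar : Xstar ∈ classAt 𝒳 s η)
    (hXstaropt : IsMartingaleOn 𝓕 μ (fun t ω => U t (Xstar t ω) ω) s)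
    -- `X(s,η')` is any test portfolio started from `η'` at time `s`
    (X : ℝ → Ω → ℝ) (hX : X ∈ classAt 𝒳 s η')
    -- the processes below are integrable
    (hInt : ∀ t, s ≤ t →
      Integrable (fun ω => (X t ω - Xstar t ω) * Ux t (Xstar t ω) ω) μ) :
    IsSupermartingaleOn 𝓕 μ
      (fun t ω => (X t ω - Xstar t ω) * Ux t (Xstar t ω) ω) s := by
  have hpos : ∀ {Y ζ}, Y ∈ classAt 𝒳 s ζ → ∀ t ω, 0 < Y t ω := fun hY ↦ (h𝒳 _ hY.1).1
  exact statement0_general (fun t _ ↦ hU.ae_concaveOn_segment (hpos hXstar t) (hpos hX t) t)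
    (fun t _ ω ↦ hUx t _ ω (hpos hXstar t ω)) hXstaropt (fun _ hε ↦
      hU.isSupermartingaleOn_lineMap h𝒳conv hs (Ioc_subset_Icc_self hε) hXstar hX) hInt
end

section
/- Let 𝒳 be a convex test class that is moreover homogeneous (λ·𝒳 ⊆ 𝒳 for every λ > 0), and let U be an 𝒳-consistent stochastic utility such that U_x = ∂U/∂x exists and is continuous. Then for every s ≥ 0 and every s-attainable wealth η > 0, the process (X*_t(s,η) · U_x(t, X*_t(s,η)))_{t ≥ s} is a martingale, where X*(s,η) is the optimal wealth process of U started from η at time s. -/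
open MeasureTheory Set Filter

variable {Ω : Type*}

/-!
Homogeneity makes every scaling `l · X*`, `l > 0`, a test portfolio, so that `U(t, l X*_t)` is a
supermartingale in `t`, and a martingale for `l = 1`. The gap between `U(t₁, l X*_{t₁})` and the
conditional expectation of `U(t₂, l X*_{t₂})` is thus nonnegative and vanishes at `l = 1`, which
forces its `l`-derivative there to vanish: this is the martingale property of `X* U_x(·, X*)`.
Differentiating under the conditional expectation is dominated convergence, because the secant
slopes of a concave function near a point are bounded by two fixed ones.
-/

section

open scoped Topology

section ConditionalExpectation

variable {m m0 : MeasurableSpace Ω} {μ : Measure Ω}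

theorem exists_seq_tendsto_ae_condExp_of_dominated {E ι : Type*} [NormedAddCommGroup E]
    [NormedSpace ℝ E] [CompleteSpace E] {l : Filter ι} [l.NeBot] [l.IsCountablyGenerated]
    {f : ι → Ω → E} {f₀ : Ω → E} {bound : Ω → ℝ}
    (hf : ∀ᶠ i in l, AEStronglyMeasurable (f i) μ) (hbound_int : Integrable bound μ)
    (hbound : ∀ᶠ i in l, ∀ᵐ ω ∂μ, ‖f i ω‖ ≤ bound ω)
    (hlim : ∀ᵐ ω ∂μ, Tendsto (fun i => f i ω) l (𝓝 (f₀ ω))) :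
    ∃ ns : ℕ → ι, Tendsto ns atTop l ∧
      ∀ᵐ ω ∂μ, Tendsto (fun n => (μ[f (ns n) | m]) ω) atTop (𝓝 ((μ[f₀ | m]) ω)) := by
  by_cases hm : m ≤ m0
  swap
  · obtain ⟨ns, hns⟩ := exists_seq_tendsto l
    exact ⟨ns, hns, ae_of_all μ fun ω => by
      simp only [condExp_of_not_le hm, tendsto_const_nhds]⟩
  by_cases hσ : SigmaFinite (μ.trim hm)
  swap
  · obtain ⟨ns, hns⟩ := exists_seq_tendsto l
    exact ⟨ns, hns, ae_of_all μ fun ω => by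
      simp only [condExp_of_not_sigmaFinite hm hσ, tendsto_const_nhds]⟩
  have hL1 : Tendsto (fun i => condExpL1 hm μ (f i)) l (𝓝 (condExpL1 hm μ f₀)) :=
    tendsto_setToFun_filter_of_dominated_convergence _ bound hf hbound hbound_int hlim
  obtain ⟨ns, hns, hae⟩ := (tendstoInMeasure_of_tendsto_Lp hL1).exists_seq_tendsto_ae'
  refine ⟨ns, hns, ?_⟩
  filter_upwards [hae, condExp_ae_eq_condExpL1 hm f₀,
    ae_all_iff.2 fun n => condExp_ae_eq_condExpL1 hm (f (ns n))] with ω hω h₀ h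
  simpa only [h₀, h] using hω

variable {ι : Type*} {l : Filter ι} [l.NeBot] [l.IsCountablyGenerated] {f g : ι → Ω → ℝ}
  {f₀ g₀ bound : Ω → ℝ}

theorem condExp_le_of_tendsto_of_dominated
    (hf : ∀ᶠ i in l, AEStronglyMeasurable (f i) μ) (hbound_int : Integrable bound μ)
    (hbound : ∀ᶠ i in l, ∀ᵐ ω ∂μ, ‖f i ω‖ ≤ bound ω)
    (hf_lim : ∀ᵐ ω ∂μ, Tendsto (fun i => f i ω) l (𝓝 (f₀ ω)))
    (hg_lim : ∀ᵐ ω ∂μ, Tendsto (fun i => g i ω) l (𝓝 (g₀ ω)))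
    (hle : ∀ᶠ i in l, μ[f i | m] ≤ᵐ[μ] g i) :
    μ[f₀ | m] ≤ᵐ[μ] g₀ := by
  obtain ⟨ns, hns, hE⟩ :=
    exists_seq_tendsto_ae_condExp_of_dominated (m := m) hf hbound_int hbound hf_lim
  obtain ⟨N, hN⟩ := eventually_atTop.1 (hns.eventually hle)
  have hle_ns : ∀ᵐ ω ∂μ, ∀ n, N ≤ n → (μ[f (ns n) | m]) ω ≤ g (ns n) ω :=
    ae_all_iff.2 fun n => eventually_imp_distrib_left.2 (hN n)
  filter_upwards [hE, hg_lim, hle_ns] with ω hEω hgω hleω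
  exact le_of_tendsto_of_tendsto hEω (hgω.comp hns) (eventually_atTop.2 ⟨N, hleω⟩)

theorem le_condExp_of_tendsto_of_dominated
    (hf : ∀ᶠ i in l, AEStronglyMeasurable (f i) μ) (hbound_int : Integrable bound μ)
    (hbound : ∀ᶠ i in l, ∀ᵐ ω ∂μ, ‖f i ω‖ ≤ bound ω)
    (hf_lim : ∀ᵐ ω ∂μ, Tendsto (fun i => f i ω) l (𝓝 (f₀ ω)))
    (hg_lim : ∀ᵐ ω ∂μ, Tendsto (fun i => g i ω) l (𝓝 (g₀ ω)))
    (hle : ∀ᶠ i in l, g i ≤ᵐ[μ] μ[f i | m]) :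
    g₀ ≤ᵐ[μ] μ[f₀ | m] := by
  have hneg : μ[-f₀ | m] ≤ᵐ[μ] -g₀ := by
    refine condExp_le_of_tendsto_of_dominated (f := -f) (g := -g)
      (hf.mono fun i hi => hi.neg) hbound_int ?_
      (hf_lim.mono fun ω hω => hω.neg) (hg_lim.mono fun ω hω => hω.neg) ?_
    · simpa only [Pi.neg_apply, norm_neg] using hbound
    · filter_upwards [hle] with i hi
      filter_upwards [hi, condExp_neg (f i) m] with ω hω hnegω
      simpa only [Pi.neg_apply, hnegω, neg_le_neg_iff] using hω
  filter_upwards [hneg, condExp_neg f₀ m] with ω hω hnegω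
  simpa only [Pi.neg_apply, hnegω, neg_le_neg_iff] using hω

theorem condExp_slope {E : Type*} [NormedAddCommGroup E] [NormedSpace ℝ E] [CompleteSpace E]
    {V : ℝ → Ω → E} {a b : ℝ} (ha : Integrable (V a) μ) (hb : Integrable (V b) μ) :
    μ[slope V a b | m] =ᵐ[μ] slope (fun l => μ[V l | m]) a b :=
  (condExp_smul _ _ m).trans ((condExp_sub hb ha m).const_smul _)

theorem condExp_slope_le_of_lt {V W : ℝ → Ω → ℝ} {a b : ℝ} (ha : Integrable (V a) μ)
    (hb : Integrable (V b) μ) (hab : a < b) (hle : μ[V b | m] ≤ᵐ[μ] W b)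
    (heq : μ[V a | m] =ᵐ[μ] W a) : μ[slope V a b | m] ≤ᵐ[μ] slope W a b := by
  filter_upwards [condExp_slope (m := m) ha hb, hle, heq] with ω hslope hleω heqω
  rw [hslope]
  simp only [slope, vsub_eq_sub, Pi.smul_apply, Pi.sub_apply, smul_eq_mul, heqω]
  exact mul_le_mul_of_nonneg_left (sub_le_sub_right hleω _) (inv_nonneg.2 (sub_pos.2 hab).le)

theorem slope_le_condExp_slope_of_gt {V W : ℝ → Ω → ℝ} {a b : ℝ} (ha : Integrable (V a) μ)
    (hb : Integrable (V b) μ) (hba : b < a) (hle : μ[V b | m] ≤ᵐ[μ] W b)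
    (heq : μ[V a | m] =ᵐ[μ] W a) : slope W a b ≤ᵐ[μ] μ[slope V a b | m] := by
  filter_upwards [condExp_slope (m := m) ha hb, hle, heq] with ω hslope hleω heqω
  rw [hslope]
  simp only [slope, vsub_eq_sub, Pi.smul_apply, Pi.sub_apply, smul_eq_mul, heqω]
  exact mul_le_mul_of_nonpos_left (sub_le_sub_right hleω _) (inv_nonpos.2 (sub_neg.2 hba).le)

/-- First-order condition at the minimum `a` of `l ↦ W l - μ[V l | m]`. -/
theorem condExp_eq_of_hasDerivAt_of_le {V W : ℝ → Ω → ℝ} {V' W' : Ω → ℝ} {a : ℝ}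
    (hV : ∀ᶠ l in 𝓝 a, Integrable (V l) μ) (hbound_int : Integrable bound μ)
    (hbound : ∀ᶠ l in 𝓝[≠] a, ∀ᵐ ω ∂μ, ‖slope V a l ω‖ ≤ bound ω)
    (hV' : ∀ᵐ ω ∂μ, HasDerivAt (fun l => V l ω) (V' ω) a)
    (hW' : ∀ᵐ ω ∂μ, HasDerivAt (fun l => W l ω) (W' ω) a)
    (hle : ∀ᶠ l in 𝓝 a, μ[V l | m] ≤ᵐ[μ] W l) (heq : μ[V a | m] =ᵐ[μ] W a) :
    μ[V' | m] =ᵐ[μ] W' := by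
  have ha : Integrable (V a) μ := hV.self_of_nhds
  have hmeas : ∀ᶠ l in 𝓝 a, AEStronglyMeasurable (slope V a l) μ :=
    hV.mono fun l hl => ((hl.sub ha).smul (l - a)⁻¹).aestronglyMeasurable
  have hV_lim : ∀ᵐ ω ∂μ, Tendsto (fun l => slope V a l ω) (𝓝[≠] a) (𝓝 (V' ω)) :=
    hV'.mono fun ω hω => hω.tendsto_slope
  have hW_lim : ∀ᵐ ω ∂μ, Tendsto (fun l => slope W a l ω) (𝓝[≠] a) (𝓝 (W' ω)) :=
    hW'.mono fun ω hω => hω.tendsto_slope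
  have hright : 𝓝[>] a ≤ 𝓝[≠] a := nhdsGT_le_nhdsNE a
  have hleft : 𝓝[<] a ≤ 𝓝[≠] a := nhdsLT_le_nhdsNE a
  refine EventuallyLE.antisymm
    (condExp_le_of_tendsto_of_dominated (l := 𝓝[>] a) (hmeas.filter_mono nhdsWithin_le_nhds)
      hbound_int (hbound.filter_mono hright) (hV_lim.mono fun ω hω => hω.mono_left hright)
      (hW_lim.mono fun ω hω => hω.mono_left hright) ?_)
    (le_condExp_of_tendsto_of_dominated (l := 𝓝[<] a) (hmeas.filter_mono nhdsWithin_le_nhds)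
      hbound_int (hbound.filter_mono hleft) (hV_lim.mono fun ω hω => hω.mono_left hleft)
      (hW_lim.mono fun ω hω => hω.mono_left hleft) ?_)
  · filter_upwards [nhdsWithin_le_nhds hV, nhdsWithin_le_nhds hle, self_mem_nhdsWithin]
      with l hVl hlel hal
    exact condExp_slope_le_of_lt ha hVl hal hlel heq
  · filter_upwards [nhdsWithin_le_nhds hV, nhdsWithin_le_nhds hle, self_mem_nhdsWithin]
      with l hVl hlel hla
    exact slope_le_condExp_slope_of_gt ha hVl hla hlel heq

end ConditionalExpectation

section Derivative

theorem abs_slope_le_of_concaveOn {𝕜 : Type*} [Field 𝕜] [LinearOrder 𝕜] [IsStrictOrderedRing 𝕜]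
    {S : Set 𝕜} {f : 𝕜 → 𝕜} {a b c l : 𝕜} (hf : ConcaveOn 𝕜 S f) (hb : b ∈ S) (hc : c ∈ S)
    (hba : b < a) (hac : a < c) (hl : l ∈ Icc b c) (hla : l ≠ a) :
    |slope f a l| ≤ max |slope f a c| |slope f a b| := by
  have hsub : Icc b c ⊆ S := hf.1.ordConnected.out hb hc
  have hanti := hf.slope_anti (hsub ⟨hba.le, hac.le⟩)
  exact abs_le_max_abs_abs (hanti ⟨hsub hl, hla⟩ ⟨hc, hac.ne'⟩ hl.2)
    (hanti ⟨hb, hba.ne⟩ ⟨hsub hl, hla⟩ hl.1)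

theorem stronglyMeasurable_of_hasDerivAt {𝕜 E : Type*} [NontriviallyNormedField 𝕜]
    [NormedAddCommGroup E] [NormedSpace 𝕜 E] {m : MeasurableSpace Ω} {V : 𝕜 → Ω → E}
    {V' : Ω → E} {a : 𝕜}
    (hV : ∀ᶠ l in 𝓝 a, StronglyMeasurable (V l))
    (hV' : ∀ ω, HasDerivAt (fun l => V l ω) (V' ω) a) : StronglyMeasurable V' := by
  obtain ⟨u, hu, hVu⟩ := exists_seq_forall_of_frequently
    (hV.filter_mono (nhdsWithin_le_nhds (s := {a}ᶜ))).frequently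
  exact stronglyMeasurable_of_tendsto (f := fun n => slope V a (u n)) atTop
    (fun n => ((hVu n).sub hV.self_of_nhds).const_smul (u n - a)⁻¹)
    (tendsto_pi_nhds.2 fun ω => (hV' ω).tendsto_slope.comp hu)

variable {m0 : MeasurableSpace Ω} {μ : Measure Ω} {V : ℝ → Ω → ℝ} {S : Set ℝ} {a : ℝ}

theorem exists_integrable_bound_slope_of_concaveOn (hS : S ∈ 𝓝 a)
    (hconc : ∀ᵐ ω ∂μ, ConcaveOn ℝ S (fun l => V l ω))
    (hV : ∀ᶠ l in 𝓝 a, Integrable (V l) μ) :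
    ∃ bound, Integrable bound μ ∧
      ∃ T ∈ 𝓝[≠] a, ∀ᵐ ω ∂μ, ∀ l ∈ T, ‖slope V a l ω‖ ≤ bound ω := by
  obtain ⟨r, hr, hball⟩ := Metric.nhds_basis_closedBall.mem_iff.1 (inter_mem hS hV)
  rw [Real.closedBall_eq_Icc] at hball
  have hslope {l : ℝ} (hl : l ∈ Icc (a - r) (a + r)) : Integrable (slope V a l) μ :=
    ((hball hl).2.sub hV.self_of_nhds).smul (l - a)⁻¹
  have hbot : a - r ∈ Icc (a - r) (a + r) := left_mem_Icc.2 (by linarith)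
  have htop : a + r ∈ Icc (a - r) (a + r) := right_mem_Icc.2 (by linarith)
  refine ⟨_, (hslope htop).abs.sup (hslope hbot).abs, Icc (a - r) (a + r) \ {a},
    sdiff_mem_nhdsWithin_compl (Icc_mem_nhds (by linarith) (by linarith)) {a}, ?_⟩
  filter_upwards [hconc] with ω hω l hl
  exact abs_slope_le_of_concaveOn hω (hball hbot).1 (hball htop).1 (by linarith) (by linarith)
    hl.1 hl.2

theorem integrable_of_hasDerivAt_of_concaveOn {V' : Ω → ℝ} (hS : S ∈ 𝓝 a)
    (hconc : ∀ᵐ ω ∂μ, ConcaveOn ℝ S (fun l => V l ω))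
    (hV : ∀ᶠ l in 𝓝 a, Integrable (V l) μ) (hV'_meas : AEStronglyMeasurable V' μ)
    (hV' : ∀ᵐ ω ∂μ, HasDerivAt (fun l => V l ω) (V' ω) a) : Integrable V' μ := by
  obtain ⟨bound, hbound_int, T, hT, hbound⟩ :=
    exists_integrable_bound_slope_of_concaveOn hS hconc hV
  refine hbound_int.mono' hV'_meas ?_
  filter_upwards [hbound, hV'] with ω hboundω hV'ω
  exact le_of_tendsto hV'ω.tendsto_slope.norm (mem_of_superset hT hboundω)

end Derivative

theorem concaveOn_comp_mul_right_Ioi {𝕜 β : Type*} [CommRing 𝕜] [PartialOrder 𝕜]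
    [IsStrictOrderedRing 𝕜] [AddCommMonoid β] [PartialOrder β] [SMul 𝕜 β] {f : 𝕜 → β}
    (hf : ConcaveOn 𝕜 (Ioi 0) f) {x : 𝕜} (hx : 0 < x) :
    ConcaveOn 𝕜 (Ioi 0) (fun l => f (l * x)) :=
  (hf.comp_linearMap (LinearMap.mulRight 𝕜 x)).subset (fun _ hl => mul_pos hl hx) (convex_Ioi 0)

theorem hasDerivAt_comp_mul_right {𝕜 : Type*} [NontriviallyNormedField 𝕜] {f : 𝕜 → 𝕜}
    {f' x l : 𝕜} (hf : HasDerivAt f f' (l * x)) :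
    HasDerivAt (fun l => f (l * x)) (x * f') l := by
  rw [mul_comm x]
  exact hf.comp l (hasDerivAt_mul_const x)

theorem statement1_general {m0 : MeasurableSpace Ω} {𝓕 : Filtration ℝ m0} {μ : Measure Ω}
    {U Ux : ℝ → ℝ → Ω → ℝ} {X : ℝ → Ω → ℝ} {s : ℝ}
    (hX : ∀ t, s ≤ t → ∀ ω, 0 < X t ω)
    (hconc : ∀ t, s ≤ t → ∀ᵐ ω ∂μ, ConcaveOn ℝ (Ioi 0) (fun x => U t x ω))
    (hUx : ∀ t, s ≤ t → ∀ ω, HasDerivAt (fun x => U t x ω) (Ux t (X t ω) ω) (X t ω))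
    (hsup : ∀ᶠ l in 𝓝 (1 : ℝ), IsSupermartingaleOn 𝓕 μ (fun t ω => U t (l * X t ω) ω) s)
    (hmart : IsMartingaleOn 𝓕 μ (fun t ω => U t (X t ω) ω) s) :
    IsMartingaleOn 𝓕 μ (fun t ω => X t ω * Ux t (X t ω) ω) s := by
  have hS : Ioi (0 : ℝ) ∈ 𝓝 1 := Ioi_mem_nhds one_pos
  have hint (t : ℝ) (ht : s ≤ t) : ∀ᶠ l in 𝓝 (1 : ℝ), Integrable (fun ω => U t (l * X t ω) ω) μ :=
    hsup.mono fun l hl => hl.2.1 t ht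
  have hconc_scale (t : ℝ) (ht : s ≤ t) :
      ∀ᵐ ω ∂μ, ConcaveOn ℝ (Ioi 0) (fun l => U t (l * X t ω) ω) :=
    (hconc t ht).mono fun ω hω => concaveOn_comp_mul_right_Ioi hω (hX t ht ω)
  have hderiv (t : ℝ) (ht : s ≤ t) (ω : Ω) :
      HasDerivAt (fun l => U t (l * X t ω) ω) (X t ω * Ux t (X t ω) ω) 1 :=
    hasDerivAt_comp_mul_right (f := fun x => U t x ω) (f' := Ux t (X t ω) ω)
      (by simpa only [one_mul] using hUx t ht ω)
  have hmeas (t : ℝ) (ht : s ≤ t) :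
      StronglyMeasurable[𝓕 t] (fun ω => X t ω * Ux t (X t ω) ω) :=
    stronglyMeasurable_of_hasDerivAt (hsup.mono fun l hl => hl.1 t ht) (hderiv t ht)
  refine ⟨hmeas, fun t ht => ?_, fun t₁ t₂ h₁ h₁₂ => ?_⟩
  · exact integrable_of_hasDerivAt_of_concaveOn hS (hconc_scale t ht) (hint t ht)
      ((hmeas t ht).mono (𝓕.le t)).aestronglyMeasurable (ae_of_all μ (hderiv t ht))
  · have h₂ : s ≤ t₂ := h₁.trans h₁₂
    obtain ⟨bound, hbound_int, T, hT, hbound⟩ :=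
      exists_integrable_bound_slope_of_concaveOn hS (hconc_scale t₂ h₂) (hint t₂ h₂)
    refine condExp_eq_of_hasDerivAt_of_le (hint t₂ h₂) hbound_int
      (mem_of_superset hT fun l hl => hbound.mono fun ω hω => hω l hl)
      (ae_of_all μ (hderiv t₂ h₂)) (ae_of_all μ (hderiv t₁ h₁))
      (hsup.mono fun l hl => hl.2.2 t₁ t₂ h₁ h₁₂) ?_
    simpa only [one_mul] using hmart.2.2 t₁ t₂ h₁ h₁₂

end

/-- for a convex and homogeneous test class `𝒳` and an `𝒳`-consistent utility `U`
with continuous partial derivative `Ux`, for every `s ≥ 0` and `s`-attainable `η > 0`, the process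
`(X*_t(s,η) · Ux(t, X*_t(s,η)))_{t ≥ s}` is a martingale, where `X*(s,η)` is the optimal wealth
process of `U` started from `η` at time `s`. -/
theorem statement1 {m0 : MeasurableSpace Ω} (𝓕 : Filtration ℝ m0) (μ : Measure Ω)
    (h0 : ∀ A : Set Ω, MeasurableSet[𝓕 0] A → μ A = 0 ∨ μ Aᶜ = 0)
    (𝒳 : Set (ℝ → Ω → ℝ))
    (h𝒳 : ∀ X ∈ 𝒳, (∀ t ω, 0 < X t ω) ∧ ∀ t, StronglyMeasurable[𝓕 t] (X t))
    (h𝒳conv : ConvexClass 𝒳) (h𝒳hom : HomogeneousClass 𝒳)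
    (U Ux : ℝ → ℝ → Ω → ℝ)
    (hU : IsConsistentUtility 𝓕 μ 𝒳 U)
    (hUx : ∀ t x ω, 0 < x → HasDerivAt (fun y => U t y ω) (Ux t x ω) x)
    (hUxcont : ∀ t ω, ContinuousOn (fun x => Ux t x ω) (Ioi 0))
    (s : ℝ) (hs : 0 ≤ s)
    (η : Ω → ℝ) (hη : ∀ ω, 0 < η ω) (hηmeas : StronglyMeasurable[𝓕 s] η)
    -- `X*(s,η)` is the optimal wealth process of `U` started from `η` at time `s`
    (Xstar : ℝ → Ω → ℝ) (hXstar : Xstar ∈ classAt 𝒳 s η)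
    (hXstaropt : IsMartingaleOn 𝓕 μ (fun t ω => U t (Xstar t ω) ω) s) :
    IsMartingaleOn 𝓕 μ (fun t ω => Xstar t ω * Ux t (Xstar t ω) ω) s := by
  obtain ⟨-, hUshape, hUsup, -⟩ := hU
  exact statement1_general (fun t _ => (h𝒳 _ hXstar.1).1 t)
    (fun t _ => (hUshape t).mono fun ω hω => hω.2.2.concaveOn)
    (fun t _ ω => hUx t _ ω ((h𝒳 _ hXstar.1).1 t ω))
    (eventually_of_mem (Ioi_mem_nhds one_pos) fun l hl =>
      hUsup s hs _ _ ⟨h𝒳hom l hl _ hXstar.1, rfl⟩)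
    hXstaropt
end

section
/- Let f : (0,∞) → (0,∞) be a continuous strictly increasing bijection of (0,∞) onto itself with inverse g, and let v : (0,∞) → (0,∞) be continuous and decreasing such that z ↦ v(g(z)) is integrable near 0 and v(z)·f(z) → 0 as z → 0+. Then for every a > 0: ∫₀^{f(a)} v(g(z)) dz = ∫_{(0,a]} v(z) df(z) = v(a)·f(a) − ∫_{(0,a]} f(z) dv(z), where df is the Stieltjes measure associated with the increasing function f and dv is the (nonpositive) Stieltjes measure associated with the decreasing function v. -/
open Set Filter MeasureTheory

/-!
For positive `x` and `t` one has `g t ≤ x ↔ t ≤ f x`. Hence `g` pushes Lebesgue measure on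
`(0, f a]` forward to `df` on `(0, a]`, which is the first equality. Likewise the superlevel sets
of `f` on `(0, a]` are `{f > t} = (g t, a]`, so by the layer cake formula
`∫_{(0,a]} f d(-v) = ∫₀^{f a} (v (g t) - v a) dt`, which is the second.
-/

open scoped Topology

section RightInverse

variable {α β : Type*} [LinearOrder α] [Preorder β] {f : α → β} {g : β → α} {s : Set α} {t : Set β}
  {x : α} {y : β}

theorem rightInvOn_le_iff (hf : StrictMonoOn f s) (hg : MapsTo g t s) (hfg : RightInvOn g f t)
    (hy : y ∈ t) (hx : x ∈ s) : g y ≤ x ↔ y ≤ f x := by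
  rw [← hf.le_iff_le (hg hy) hx, hfg hy]

theorem rightInvOn_lt_iff (hf : StrictMonoOn f s) (hg : MapsTo g t s) (hfg : RightInvOn g f t)
    (hy : y ∈ t) (hx : x ∈ s) : g y < x ↔ y < f x := by
  rw [← hf.lt_iff_lt (hg hy) hx, hfg hy]

theorem lt_rightInvOn_iff (hf : StrictMonoOn f s) (hg : MapsTo g t s) (hfg : RightInvOn g f t)
    (hy : y ∈ t) (hx : x ∈ s) : x < g y ↔ f x < y := by
  rw [← hf.lt_iff_lt hx (hg hy), hfg hy]

end RightInverse

section ContinuityFromBelow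

variable {α : Type*} [LinearOrder α] [TopologicalSpace α] [OrderTopology α]
  [FirstCountableTopology α] [DenselyOrdered α] [MeasurableSpace α]

theorem tendsto_measure_Ioc_nhdsGT (μ : Measure α) (p c : α) :
    Tendsto (fun x => μ (Ioc x c)) (𝓝[>] p) (𝓝 (μ (Ioc p c))) := by
  have : (atBot : Filter (Ioi p)).IsCountablyGenerated := by
    rw [← comap_coe_Ioi_nhdsGT p]
    infer_instance
  have iUnion_Ioc : ⋃ x : Ioi p, Ioc (x : α) c = Ioc p c := by
    ext y
    simp only [mem_iUnion, mem_Ioc, Subtype.exists, mem_Ioi, exists_prop]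
    constructor
    · rintro ⟨x, hpx, hxy, hyc⟩
      exact ⟨hpx.trans hxy, hyc⟩
    · rintro ⟨hpy, hyc⟩
      obtain ⟨x, hpx, hxy⟩ := exists_between hpy
      exact ⟨x, hpx, hxy, hyc⟩
  rw [← tendsto_comp_coe_Ioi_atBot, ← iUnion_Ioc]
  exact tendsto_measure_iUnion_atBot fun _ _ h => Ioc_subset_Ioc_left h

theorem measure_Ioc_eq_ofReal_sub_of_tendsto {μ : Measure α} {f : α → ℝ} {p a : α} {l : ℝ}
    (hlim : Tendsto f (𝓝[>] p) (𝓝 l)) (hpa : p < a)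
    (hμ : ∀ x ∈ Ioo p a, μ (Ioc x a) = ENNReal.ofReal (f a - f x)) :
    μ (Ioc p a) = ENNReal.ofReal (f a - l) := by
  have : (𝓝[>] p).NeBot := nhdsGT_neBot_of_exists_gt ⟨a, hpa⟩
  refine tendsto_nhds_unique (tendsto_measure_Ioc_nhdsGT μ p a) ?_
  refine (ENNReal.tendsto_ofReal (hlim.const_sub (f a))).congr' ?_
  filter_upwards [Ioo_mem_nhdsGT hpa] with x hx
  exact (hμ x hx).symm

end ContinuityFromBelow

section PositiveHalfLine

variable {f g v : ℝ → ℝ} {a : ℝ}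

theorem tendsto_nhdsGT_zero_of_rightInvOn (hf : StrictMonoOn f (Ioi 0))
    (hfmaps : MapsTo f (Ioi 0) (Ioi 0)) (hg : MapsTo g (Ioi 0) (Ioi 0))
    (hfg : RightInvOn g f (Ioi 0)) : Tendsto f (𝓝[>] 0) (𝓝 0) := by
  refine tendsto_order.2 ⟨fun b hb => ?_, fun b hb => ?_⟩
  · filter_upwards [self_mem_nhdsWithin] with x hx
    exact hb.trans (hfmaps hx)
  · filter_upwards [Ioo_mem_nhdsGT (hg hb)] with x hx
    exact (lt_rightInvOn_iff hf hg hfg hb hx.1).1 hx.2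

theorem preimage_Iic_inter_Ioc_of_rightInvOn (hf : StrictMonoOn f (Ioi 0))
    (hg : MapsTo g (Ioi 0) (Ioi 0)) (hfg : RightInvOn g f (Ioi 0)) (ha : 0 < a) {x : ℝ}
    (hx : 0 < x) : g ⁻¹' Iic x ∩ Ioc 0 (f a) = Ioc 0 (f (min a x)) := by
  ext t
  simp only [mem_inter_iff, mem_preimage, mem_Iic, mem_Ioc]
  rw [and_left_comm, and_congr_right_iff]
  intro ht
  rw [← rightInvOn_le_iff hf hg hfg ht ha, ← rightInvOn_le_iff hf hg hfg ht (lt_min ha hx),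
    le_min_iff, and_comm]

theorem aemeasurable_restrict_Ioc_of_rightInvOn {μ : Measure ℝ} {b : ℝ}
    (hf : StrictMonoOn f (Ioi 0)) (hg : MapsTo g (Ioi 0) (Ioi 0)) (hfg : RightInvOn g f (Ioi 0)) :
    AEMeasurable g (μ.restrict (Ioc 0 b)) :=
  aemeasurable_restrict_of_monotoneOn measurableSet_Ioc <|
    (Function.monotoneOn_of_rightInvOn_of_mapsTo hf.monotoneOn hfg hg).mono Ioc_subset_Ioi_self

theorem map_restrict_Ioc_of_rightInvOn {μf : Measure ℝ} (hf : StrictMonoOn f (Ioi 0))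
    (hfmaps : MapsTo f (Ioi 0) (Ioi 0)) (hg : MapsTo g (Ioi 0) (Ioi 0))
    (hfg : RightInvOn g f (Ioi 0))
    (hμf : ∀ x y, 0 < x → x ≤ y → μf (Ioc x y) = ENNReal.ofReal (f y - f x)) (ha : 0 < a) :
    (volume.restrict (Ioc 0 (f a))).map g = μf.restrict (Ioc 0 a) := by
  have hgmeas : AEMeasurable g (volume.restrict (Ioc 0 (f a))) :=
    aemeasurable_restrict_Ioc_of_rightInvOn hf hg hfg
  have measure_Ioc_zero {x : ℝ} (hx : 0 < x) : μf (Ioc 0 x) = ENNReal.ofReal (f x - 0) :=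
    measure_Ioc_eq_ofReal_sub_of_tendsto (tendsto_nhdsGT_zero_of_rightInvOn hf hfmaps hg hfg) hx
      fun y hy => hμf y x hy.1 hy.2.le
  refine Measure.ext_of_Iic _ _ fun x => ?_
  rw [Measure.map_apply_of_aemeasurable hgmeas measurableSet_Iic,
    Measure.restrict_apply' measurableSet_Ioc, Measure.restrict_apply' measurableSet_Ioc]
  rcases le_or_gt x 0 with hx | hx
  · have preimage_empty : g ⁻¹' Iic x ∩ Ioc 0 (f a) = ∅ :=
      eq_empty_of_forall_notMem fun t ht => ((hg ht.2.1).trans_le ht.1).not_ge hx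
    have inter_empty : Iic x ∩ Ioc 0 a = ∅ :=
      eq_empty_of_forall_notMem fun z hz => (hz.2.1.trans_le hz.1).not_ge hx
    rw [preimage_empty, inter_empty, measure_empty, measure_empty]
  · rw [preimage_Iic_inter_Ioc_of_rightInvOn hf hg hfg ha hx, inter_comm, Ioc_inter_Iic,
      measure_Ioc_zero (lt_min ha hx), Real.volume_Ioc]

theorem setIntegral_comp_rightInvOn {E : Type*} [NormedAddCommGroup E] [NormedSpace ℝ E]
    {μf : Measure ℝ} (hf : StrictMonoOn f (Ioi 0)) (hfmaps : MapsTo f (Ioi 0) (Ioi 0))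
    (hg : MapsTo g (Ioi 0) (Ioi 0)) (hfg : RightInvOn g f (Ioi 0))
    (hμf : ∀ x y, 0 < x → x ≤ y → μf (Ioc x y) = ENNReal.ofReal (f y - f x)) (ha : 0 < a)
    {h : ℝ → E} (hh : AEStronglyMeasurable h (μf.restrict (Ioc 0 a))) :
    ∫ t in Ioc 0 (f a), h (g t) = ∫ x in Ioc 0 a, h x ∂μf := by
  have hgmeas : AEMeasurable g (volume.restrict (Ioc 0 (f a))) :=
    aemeasurable_restrict_Ioc_of_rightInvOn hf hg hfg
  have map_eq := map_restrict_Ioc_of_rightInvOn hf hfmaps hg hfg hμf ha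
  rw [← map_eq, integral_map hgmeas (map_eq ▸ hh)]

theorem setLIntegral_ofReal_eq_setLIntegral_measure_Ioc {μ : Measure ℝ}
    (hf : StrictMonoOn f (Ioi 0)) (hfmaps : MapsTo f (Ioi 0) (Ioi 0))
    (hg : MapsTo g (Ioi 0) (Ioi 0)) (hfg : RightInvOn g f (Ioi 0)) (ha : 0 < a) :
    ∫⁻ x in Ioc 0 a, ENNReal.ofReal (f x) ∂μ = ∫⁻ t in Ioc 0 (f a), μ (Ioc (g t) a) := by
  have hfnonneg : 0 ≤ᵐ[μ.restrict (Ioc 0 a)] f :=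
    ae_restrict_of_forall_mem measurableSet_Ioc fun x hx => (hfmaps hx.1).le
  have hfmeas : AEMeasurable f (μ.restrict (Ioc 0 a)) :=
    aemeasurable_restrict_of_monotoneOn measurableSet_Ioc (hf.monotoneOn.mono Ioc_subset_Ioi_self)
  have superlevel {t : ℝ} (ht : 0 < t) : {x | t < f x} ∩ Ioc 0 a = Ioc (g t) a := by
    ext x
    constructor
    · rintro ⟨htx, hx, hxa⟩
      exact ⟨(rightInvOn_lt_iff hf hg hfg ht hx).2 htx, hxa⟩
    · rintro ⟨hgx, hxa⟩
      have hx : 0 < x := (hg ht).trans hgx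
      exact ⟨(rightInvOn_lt_iff hf hg hfg ht hx).1 hgx, hx, hxa⟩
  have measure_Ioc_eq_zero {t : ℝ} (ht : t ∈ Ioi (f a)) : μ (Ioc (g t) a) = 0 := by
    have htpos : 0 < t := lt_trans (hfmaps ha) ht
    have hag : a < g t := (lt_rightInvOn_iff hf hg hfg htpos ha).2 ht
    rw [Ioc_eq_empty hag.not_gt, measure_empty]
  calc ∫⁻ x in Ioc 0 a, ENNReal.ofReal (f x) ∂μ
      = ∫⁻ t in Ioi 0, μ.restrict (Ioc 0 a) {x | t < f x} :=
        lintegral_eq_lintegral_meas_lt _ hfnonneg hfmeas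
    _ = ∫⁻ t in Ioi 0, μ (Ioc (g t) a) :=
        setLIntegral_congr_fun measurableSet_Ioi fun t ht => by
          rw [Measure.restrict_apply' measurableSet_Ioc, superlevel ht]
    _ = ∫⁻ t in Ioc 0 (f a), μ (Ioc (g t) a) := by
        rw [← Ioc_union_Ioi_eq_Ioi (hfmaps ha).le,
          lintegral_union measurableSet_Ioi Ioc_disjoint_Ioi_same,
          setLIntegral_eq_zero measurableSet_Ioi fun t ht => measure_Ioc_eq_zero ht, add_zero]

theorem setIntegral_eq_setIntegral_comp_rightInvOn_sub {μv : Measure ℝ}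
    (hf : StrictMonoOn f (Ioi 0)) (hfmaps : MapsTo f (Ioi 0) (Ioi 0))
    (hg : MapsTo g (Ioi 0) (Ioi 0)) (hfg : RightInvOn g f (Ioi 0)) (hv : AntitoneOn v (Ioi 0))
    (hμv : ∀ x y, 0 < x → x ≤ y → μv (Ioc x y) = ENNReal.ofReal (v x - v y)) (ha : 0 < a) :
    ∫ x in Ioc 0 a, f x ∂μv = ∫ t in Ioc 0 (f a), (v (g t) - v a) := by
  have hgmono : MonotoneOn g (Ioi 0) :=
    Function.monotoneOn_of_rightInvOn_of_mapsTo hf.monotoneOn hfg hg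
  have hvganti : AntitoneOn (fun t => v (g t)) (Ioi 0) :=
    hv.comp_MonotoneOn hgmono hg
  have hfnonneg : 0 ≤ᵐ[μv.restrict (Ioc 0 a)] f :=
    ae_restrict_of_forall_mem measurableSet_Ioc fun x hx => (hfmaps hx.1).le
  have hfmeas : AEMeasurable f (μv.restrict (Ioc 0 a)) :=
    aemeasurable_restrict_of_monotoneOn measurableSet_Ioc (hf.monotoneOn.mono Ioc_subset_Ioi_self)
  have hvgmeas : AEMeasurable (fun t => v (g t)) (volume.restrict (Ioc 0 (f a))) :=
    aemeasurable_restrict_of_antitoneOn measurableSet_Ioc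
      (hvganti.mono Ioc_subset_Ioi_self)
  have hga {t : ℝ} (ht : t ∈ Ioc 0 (f a)) : g t ≤ a :=
    (rightInvOn_le_iff hf hg hfg ht.1 ha).2 ht.2
  have hvnonneg : 0 ≤ᵐ[volume.restrict (Ioc 0 (f a))] fun t => v (g t) - v a :=
    ae_restrict_of_forall_mem measurableSet_Ioc fun t ht =>
      sub_nonneg.2 (hv (hg ht.1) ha (hga ht))
  rw [integral_eq_lintegral_of_nonneg_ae hfnonneg hfmeas.aestronglyMeasurable,
    integral_eq_lintegral_of_nonneg_ae hvnonneg (hvgmeas.sub_const _).aestronglyMeasurable,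
    setLIntegral_ofReal_eq_setLIntegral_measure_Ioc hf hfmaps hg hfg ha,
    setLIntegral_congr_fun measurableSet_Ioc fun t ht => hμv (g t) a (hg ht.1) (hga ht)]

theorem statement10_general {μf μv : Measure ℝ} (hf : StrictMonoOn f (Ioi 0))
    (hfmaps : MapsTo f (Ioi 0) (Ioi 0)) (hg : MapsTo g (Ioi 0) (Ioi 0))
    (hfg : RightInvOn g f (Ioi 0)) (hv : AntitoneOn v (Ioi 0))
    (hμf : ∀ x y, 0 < x → x ≤ y → μf (Ioc x y) = ENNReal.ofReal (f y - f x))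
    (hμv : ∀ x y, 0 < x → x ≤ y → μv (Ioc x y) = ENNReal.ofReal (v x - v y)) (ha : 0 < a)
    (hint : IntegrableOn (fun t => v (g t)) (Ioc 0 (f a))) :
    (∫ t in Ioc 0 (f a), v (g t)) = (∫ x in Ioc 0 a, v x ∂μf) ∧
      (∫ x in Ioc 0 a, v x ∂μf) = v a * f a + ∫ x in Ioc 0 a, f x ∂μv := by
  have hvmeas : AEMeasurable v (μf.restrict (Ioc 0 a)) :=
    aemeasurable_restrict_of_antitoneOn measurableSet_Ioc (hv.mono Ioc_subset_Ioi_self)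
  have change_of_variables : ∫ t in Ioc 0 (f a), v (g t) = ∫ x in Ioc 0 a, v x ∂μf :=
    setIntegral_comp_rightInvOn hf hfmaps hg hfg hμf ha hvmeas.aestronglyMeasurable
  have setIntegral_const_eq : ∫ _ in Ioc 0 (f a), v a = v a * f a := by
    rw [setIntegral_const, Real.volume_real_Ioc_of_le (hfmaps ha).le, sub_zero, smul_eq_mul,
      mul_comm]
  refine ⟨change_of_variables, ?_⟩
  rw [← change_of_variables,
    setIntegral_eq_setIntegral_comp_rightInvOn_sub hf hfmaps hg hfg hv hμv ha,
    integral_sub hint (integrableOn_const measure_Ioc_lt_top.ne), setIntegral_const_eq,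
    add_sub_cancel]

end PositiveHalfLine

/-- for a continuous strictly increasing bijection `f` of `(0,∞)` onto itself with
inverse `g` and a continuous decreasing positive `v` with `v∘g` integrable near `0` and
`v(z)·f(z) → 0` as `z → 0⁺`, one has, for every `a > 0`,
`∫₀^{f(a)} v(g(z)) dz = ∫_{(0,a]} v df = v(a)·f(a) − ∫_{(0,a]} f dv`, where `μf = df` is the
Stieltjes measure of the increasing `f` and `μv = −dv` is the Stieltjes measure of the
decreasing `v` (so that `−∫ f dv = +∫ f dμv`). -/
theorem statement10 (f g v : ℝ → ℝ) (μf μv : Measure ℝ)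
    (hfcont : ContinuousOn f (Ioi 0)) (hfmono : StrictMonoOn f (Ioi 0))
    (hfbij : BijOn f (Ioi 0) (Ioi 0))
    (hgmaps : MapsTo g (Ioi 0) (Ioi 0))
    (hgleft : ∀ x ∈ Ioi (0:ℝ), g (f x) = x)
    (hgright : ∀ z ∈ Ioi (0:ℝ), f (g z) = z)
    (hvcont : ContinuousOn v (Ioi 0)) (hvpos : ∀ x ∈ Ioi (0:ℝ), 0 < v x)
    (hvanti : AntitoneOn v (Ioi 0))
    (hint : ∀ b ∈ Ioi (0:ℝ), IntegrableOn (fun z => v (g z)) (Ioc 0 b))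
    (hlim : Tendsto (fun z => v z * f z) (nhdsWithin 0 (Ioi 0)) (nhds 0))
    -- `μf` is the Stieltjes measure of `f`; `μv` is the Stieltjes measure of `-v`
    (hμf : ∀ a b : ℝ, 0 < a → a ≤ b → μf (Ioc a b) = ENNReal.ofReal (f b - f a))
    (hμv : ∀ a b : ℝ, 0 < a → a ≤ b → μv (Ioc a b) = ENNReal.ofReal (v a - v b)) :
    ∀ a ∈ Ioi (0:ℝ),
      (∫ z in Ioc (0:ℝ) (f a), v (g z)) = (∫ z in Ioc (0:ℝ) a, v z ∂μf) ∧
      (∫ z in Ioc (0:ℝ) a, v z ∂μf) = v a * f a + ∫ z in Ioc (0:ℝ) a, f z ∂μv :=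
  fun a ha => statement10_general hfmono hfbij.mapsTo hgmaps hgright hvanti hμf hμv ha
    (hint (f a) (hfbij.mapsTo ha))
end

section
/- Let u : (0,∞) → ℝ be strictly concave and continuously differentiable with u' a strictly decreasing bijection of (0,∞) onto (0,∞) (Inada conditions), and let X : (0,∞) → (0,∞) be a continuous strictly increasing bijection with inverse 𝒳 such that U(x) := ∫₀ˣ u'(𝒳(z)) dz is finite for all x > 0, and z ↦ X((u')⁻¹(z)) is integrable on (y,∞) for each y > 0. Then the convex conjugate Ũ(y) := sup_{x>0}(U(x) − x·y) satisfies Ũ(y) = ∫_y^∞ X((u')⁻¹(z)) dz for every y > 0; equivalently, since (u')⁻¹(z) = −ũ'(z) where ũ(y) = sup_{x>0}(u(x) − xy), one has Ũ(y) = ∫_y^∞ X(−ũ'(z)) dz. -/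
open Set

/-!
Since `f := u' ∘ XI` is decreasing with inverse `g := X ∘ I`, the region between the graph of `f`
and the level `y` has area `∫₀^∞ (f - y)⁺`, and slicing it horizontally instead of vertically turns
this area into `∫_y^∞ g`. It dominates `∫₀ˣ f - x y = ∫₀ˣ (f - y)` for every `x`, with equality at
`x = g y`, where `f` crosses the level `y`.

For the conjugate `ũ` of `u`, the maximiser of `x ↦ u x - x y` is `I y`. Testing the supremum at
another point `w` with the maximiser for `y` shows that `-I` selects a subgradient of `ũ`; as it
does so continuously, it is the derivative.
-/

section ConvexConjugate

open Filter Topology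

/-- The convex conjugate `ũ(y) = sup_{x ∈ s} (u(x) - x y)` of a concave utility `u` on `s`. It is a
real-valued supremum, hence `0` when the set of values is unbounded above. -/
noncomputable def convexConjugateOn (s : Set ℝ) (u : ℝ → ℝ) (y : ℝ) : ℝ :=
  sSup ((fun x => u x - x * y) '' s)

variable {s : Set ℝ} {u : ℝ → ℝ} {x y c m : ℝ}

theorem isGreatest_image_of_isMaxOn {α β : Type*} [Preorder β] {f : α → β} {s : Set α} {a : α}
    (ha : a ∈ s) (h : IsMaxOn f s a) : IsGreatest (f '' s) (f a) :=
  ⟨mem_image_of_mem f ha, forall_mem_image.2 h⟩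

theorem convexConjugateOn_eq_of_isMaxOn (hc : c ∈ s) (h : IsMaxOn (fun x => u x - x * y) s c) :
    convexConjugateOn s u y = u c - c * y :=
  (isGreatest_image_of_isMaxOn hc h).csSup_eq

theorem le_convexConjugateOn_of_isMaxOn (hx : x ∈ s) (hc : c ∈ s)
    (h : IsMaxOn (fun x => u x - x * y) s c) : u x - x * y ≤ convexConjugateOn s u y :=
  (convexConjugateOn_eq_of_isMaxOn hc h).symm ▸ h hx

theorem isMaxOn_sub_mul_of_hasDerivAt (hu : ConcaveOn ℝ s u) (hc : c ∈ interior s)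
    (hm : HasDerivAt u m c) : IsMaxOn (fun x => u x - x * m) s c := by
  have hconv : ConvexOn ℝ s fun x => x * m - u x :=
    ((LinearMap.mulRight ℝ m).convexOn hu.1).sub hu
  have hderiv : HasDerivAt (fun x => x * m - u x) 0 c := by
    simpa only [one_mul, sub_self] using ((hasDerivAt_id' c).mul_const m).fun_sub hm
  have hmin : IsMinOn (fun x => x * m - u x) s c :=
    hconv.isMinOn_of_rightDeriv_eq_zero hc
      (hderiv.hasDerivWithinAt.derivWithin (uniqueDiffWithinAt_Ioi c))
  simpa only [neg_sub] using hmin.neg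

theorem hasDerivAt_of_subgradient_of_continuousAt {φ p : ℝ → ℝ}
    (hat : ∀ᶠ w in 𝓝 y, φ y + p y * (w - y) ≤ φ w)
    (hnear : ∀ᶠ w in 𝓝 y, φ w + p w * (y - w) ≤ φ y) (hp : ContinuousAt p y) :
    HasDerivAt φ (p y) y := by
  rw [hasDerivAt_iff_isLittleO, Asymptotics.isLittleO_iff]
  intro ε hε
  filter_upwards [hat, hnear, Metric.continuousAt_iff'.1 hp ε hε] with w hy hw hdist
  have hnonneg : 0 ≤ φ w - φ y - (w - y) * p y := by linarith
  calc ‖φ w - φ y - (w - y) • p y‖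
      = φ w - φ y - (w - y) * p y := by rw [smul_eq_mul, Real.norm_of_nonneg hnonneg]
    _ ≤ (p w - p y) * (w - y) := by linarith
    _ ≤ ‖p w - p y‖ * ‖w - y‖ := (Real.le_norm_self _).trans_eq (norm_mul _ _)
    _ ≤ ε * ‖w - y‖ := by
      rw [← dist_eq_norm (p w)]
      gcongr

theorem hasDerivAt_convexConjugateOn_of_isMaxOn {I : ℝ → ℝ}
    (hmem : ∀ᶠ w in 𝓝 y, I w ∈ s)
    (hmax : ∀ᶠ w in 𝓝 y, IsMaxOn (fun x => u x - x * w) s (I w)) (hI : ContinuousAt I y) :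
    HasDerivAt (convexConjugateOn s u) (-(I y)) y := by
  have hy_mem := hmem.self_of_nhds
  have hy_max := hmax.self_of_nhds
  refine hasDerivAt_of_subgradient_of_continuousAt (p := fun w => -(I w)) ?_ ?_ hI.neg
  · filter_upwards [hmem, hmax] with w hw hw_max
    have htest := le_convexConjugateOn_of_isMaxOn hy_mem hw hw_max
    rw [convexConjugateOn_eq_of_isMaxOn hy_mem hy_max]
    linarith
  · filter_upwards [hmem, hmax] with w hw hw_max
    have htest := le_convexConjugateOn_of_isMaxOn hw hy_mem hy_max
    rw [convexConjugateOn_eq_of_isMaxOn hw hw_max]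
    linarith

theorem continuousAt_of_antitoneOn_of_image_mem_nhds {α β : Type*}
    [LinearOrder α] [TopologicalSpace α] [OrderTopology α]
    [LinearOrder β] [TopologicalSpace β] [OrderTopology β] [DenselyOrdered β]
    {f : α → β} {s : Set α} {a : α} (hf : AntitoneOn f s) (hs : s ∈ 𝓝 a)
    (hfs : f '' s ∈ 𝓝 (f a)) : ContinuousAt f a :=
  continuousAt_of_monotoneOn_of_image_mem_nhds (β := βᵒᵈ) hf.dual_right hs hfs

theorem hasDerivAt_convexConjugateOn_of_invOn {u' I : ℝ → ℝ} {t : Set ℝ}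
    (hs : IsOpen s) (ht : IsOpen t) (hu : ConcaveOn ℝ s u) (hu' : ∀ x ∈ s, HasDerivAt u (u' x) x)
    (hanti : AntitoneOn u' s) (hmaps : MapsTo u' s t) (hImaps : MapsTo I t s)
    (hinv : InvOn I u' s t) (hy : y ∈ t) :
    HasDerivAt (convexConjugateOn s u) (-(I y)) y := by
  have ht_nhds : ∀ᶠ w in 𝓝 y, w ∈ t := ht.mem_nhds hy
  have hI_cont : ContinuousAt I y :=
    continuousAt_of_antitoneOn_of_image_mem_nhds
      (Function.antitoneOn_of_rightInvOn_of_mapsTo hanti hinv.2 hImaps) ht_nhds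
      (mem_of_superset (hs.mem_nhds (hImaps hy)) (hinv.1.surjOn hmaps))
  refine hasDerivAt_convexConjugateOn_of_isMaxOn (ht_nhds.mono fun w hw => hImaps hw) ?_ hI_cont
  filter_upwards [ht_nhds] with w hw
  have hderiv : HasDerivAt u w (I w) := by
    simpa only [hinv.2 hw] using hu' (I w) (hImaps hw)
  exact isMaxOn_sub_mul_of_hasDerivAt hu (hs.interior_eq.symm ▸ hImaps hw) hderiv

end ConvexConjugate

section LayerCake

open MeasureTheory

theorem integral_posPart_sub_eq_integral_meas_lt {α : Type*} [MeasurableSpace α] {μ : Measure α}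
    {f : α → ℝ} {y : ℝ} (hf : Integrable (fun x => (f x - y)⁺) μ) :
    ∫ x, (f x - y)⁺ ∂μ = ∫ t in Ioi y, μ.real {x | t < f x} := by
  have hlevel : ∀ t ∈ Ioi (0 : ℝ), {x | t < (f x - y)⁺} = {x | t + y < f x} := fun t ht => by
    ext x
    simp only [posPart_def, mem_ofPred_eq, lt_sup_iff, (mem_Ioi.1 ht).not_gt, or_false,
      lt_sub_iff_add_lt]
  have hshift : (fun t => t + y) ⁻¹' Ioi y = Ioi 0 := by simp
  calc ∫ x, (f x - y)⁺ ∂μ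
      = ∫ t in Ioi 0, μ.real {x | t < (f x - y)⁺} :=
        hf.integral_eq_integral_meas_lt (.of_forall fun x => posPart_nonneg _)
    _ = ∫ t in Ioi 0, μ.real {x | t + y < f x} :=
        setIntegral_congr_fun measurableSet_Ioi fun t ht => congrArg μ.real (hlevel t ht)
    _ = ∫ t in Ioi y, μ.real {x | t < f x} := by
        rw [← hshift]
        exact (measurePreserving_add_right volume y).setIntegral_preimage_emb
          (measurableEmbedding_addRight y) (fun t => μ.real {x | t < f x}) (Ioi y)

theorem setIntegral_Ioc_sub_const {f : ℝ → ℝ} {x : ℝ} (hx : 0 ≤ x)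
    (hf : IntegrableOn f (Ioc 0 x)) (y : ℝ) :
    ∫ z in Ioc 0 x, (f z - y) = (∫ z in Ioc 0 x, f z) - x * y := by
  rw [integral_sub hf (integrable_const y), setIntegral_const, Real.volume_real_Ioc_of_le hx,
    sub_zero, smul_eq_mul]

end LayerCake

section GeneralizedInverse

open MeasureTheory

/-- `g` is a generalized inverse of `f` on `(0,∞)`: the superlevel set `{f > y}` is `(0, g y)`. This
holds for a decreasing bijection and its inverse, and is the form in which the layer-cake formula
uses that relation. -/
def IsGeneralizedInverse (f g : ℝ → ℝ) : Prop :=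
  ∀ ⦃x⦄, 0 < x → ∀ ⦃y⦄, 0 < y → (y < f x ↔ x < g y)

theorem IsGeneralizedInverse.of_strictAntiOn {f g : ℝ → ℝ} (hf : StrictAntiOn f (Ioi 0))
    (hg : MapsTo g (Ioi 0) (Ioi 0)) (hinv : RightInvOn g f (Ioi 0)) :
    IsGeneralizedInverse f g := fun x hx y hy => by
  rw [← hf.lt_iff_gt (hg hy) hx, hinv hy]

namespace IsGeneralizedInverse

variable {f g : ℝ → ℝ} {x y : ℝ}

theorem comp_strictMonoOn {h k : ℝ → ℝ} (hfg : IsGeneralizedInverse f g)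
    (hg : MapsTo g (Ioi 0) (Ioi 0)) (hh : StrictMonoOn h (Ioi 0)) (hk : MapsTo k (Ioi 0) (Ioi 0))
    (hinv : RightInvOn k h (Ioi 0)) :
    IsGeneralizedInverse (fun x => f (k x)) (fun y => h (g y)) := fun x hx y hy => by
  rw [hfg (hk hx) hy, ← hh.lt_iff_lt (hk hx) (hg hy), hinv hx]

theorem posPart_sub_eq_self (hfg : IsGeneralizedInverse f g) (hx : 0 < x) (hy : 0 < y)
    (hxy : x < g y) : (f x - y)⁺ = f x - y :=
  posPart_eq_self.2 (sub_nonneg.2 ((hfg hx hy).2 hxy).le)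

theorem posPart_sub_eq_zero (hfg : IsGeneralizedInverse f g) (hx : 0 < x) (hy : 0 < y)
    (hxy : g y ≤ x) : (f x - y)⁺ = 0 :=
  posPart_eq_zero.2 (sub_nonpos.2 (not_lt.1 fun hlt => ((hfg hx hy).1 hlt).not_ge hxy))

theorem integrableOn_posPart_sub (hfg : IsGeneralizedInverse f g) (hy : 0 < y)
    (hf : IntegrableOn f (Ioc 0 (g y))) : IntegrableOn (fun x => (f x - y)⁺) (Ioi 0) :=
  IntegrableOn.of_forall_sdiff_eq_zero (hf.sub (integrable_const y)).pos_part measurableSet_Ioi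
    fun _ hx => hfg.posPart_sub_eq_zero hx.1 hy (not_lt.1 fun hlt => hx.2 ⟨hx.1, hlt.le⟩)

theorem setIntegral_posPart_sub (hfg : IsGeneralizedInverse f g) (hy : 0 < y)
    (hg : ∀ t ∈ Ioi y, 0 ≤ g t) (hf : IntegrableOn f (Ioc 0 (g y))) :
    ∫ x in Ioi 0, (f x - y)⁺ = ∫ t in Ioi y, g t := by
  rw [integral_posPart_sub_eq_integral_meas_lt (hfg.integrableOn_posPart_sub hy hf)]
  refine setIntegral_congr_fun measurableSet_Ioi fun t ht => ?_
  have hlevel : {x | t < f x} ∩ Ioi 0 = Ioo 0 (g t) := by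
    ext x
    rw [inter_comm]
    exact and_congr_right fun hx => hfg hx (hy.trans ht)
  simp only [measureReal_restrict_apply' measurableSet_Ioi, hlevel,
    Real.volume_real_Ioo_of_le (hg t ht), sub_zero]

theorem setIntegral_Ioc_sub_mul_le (hfg : IsGeneralizedInverse f g) (hy : 0 < y) (hx : 0 ≤ x)
    (hfx : IntegrableOn f (Ioc 0 x)) (hf : IntegrableOn f (Ioc 0 (g y))) :
    (∫ z in Ioc 0 x, f z) - x * y ≤ ∫ z in Ioi 0, (f z - y)⁺ := by
  have hsub : IntegrableOn (fun z => f z - y) (Ioc 0 x) := hfx.sub (integrable_const y)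
  have hpos := hfg.integrableOn_posPart_sub hy hf
  calc (∫ z in Ioc 0 x, f z) - x * y
      = ∫ z in Ioc 0 x, (f z - y) := (setIntegral_Ioc_sub_const hx hfx y).symm
    _ ≤ ∫ z in Ioc 0 x, (f z - y)⁺ :=
        setIntegral_mono hsub hsub.pos_part fun z => le_posPart (f z - y)
    _ ≤ ∫ z in Ioi 0, (f z - y)⁺ :=
        setIntegral_mono_set hpos (.of_forall fun z => posPart_nonneg _)
          Ioc_subset_Ioi_self.eventuallyLE

theorem setIntegral_Ioc_sub_mul_eq (hfg : IsGeneralizedInverse f g) (hy : 0 < y) (hgy : 0 ≤ g y)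
    (hf : IntegrableOn f (Ioc 0 (g y))) :
    (∫ z in Ioc 0 (g y), f z) - g y * y = ∫ z in Ioi 0, (f z - y)⁺ :=
  calc (∫ z in Ioc 0 (g y), f z) - g y * y
      = ∫ z in Ioc 0 (g y), (f z - y) := (setIntegral_Ioc_sub_const hgy hf y).symm
    _ = ∫ z in Ioo 0 (g y), (f z - y) := integral_Ioc_eq_integral_Ioo
    _ = ∫ z in Ioo 0 (g y), (f z - y)⁺ :=
        setIntegral_congr_fun measurableSet_Ioo fun _ hz =>
          (hfg.posPart_sub_eq_self hz.1 hy hz.2).symm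
    _ = ∫ z in Ioi 0, (f z - y)⁺ :=
        (setIntegral_eq_of_subset_of_forall_sdiff_eq_zero measurableSet_Ioi Ioo_subset_Ioi_self
          fun _ hz => hfg.posPart_sub_eq_zero hz.1 hy (not_lt.1 fun hlt => hz.2 ⟨hz.1, hlt⟩)).symm

theorem convexConjugateOn_setIntegral (hfg : IsGeneralizedInverse f g)
    (hg : MapsTo g (Ioi 0) (Ioi 0)) (hf : ∀ x ∈ Ioi (0 : ℝ), IntegrableOn f (Ioc 0 x))
    (hy : 0 < y) :
    convexConjugateOn (Ioi 0) (fun x => ∫ z in Ioc 0 x, f z) y = ∫ t in Ioi y, g t := by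
  have hfy := hf (g y) (hg hy)
  have hval := hfg.setIntegral_Ioc_sub_mul_eq hy (hg hy).le hfy
  have hmax : IsMaxOn (fun x => (∫ z in Ioc 0 x, f z) - x * y) (Ioi 0) (g y) := fun x hx =>
    (hfg.setIntegral_Ioc_sub_mul_le hy hx.le (hf x hx) hfy).trans_eq hval.symm
  rw [convexConjugateOn_eq_of_isMaxOn (hg hy) hmax, hval]
  exact hfg.setIntegral_posPart_sub hy (fun t ht => (hg (hy.trans ht)).le) hfy

end IsGeneralizedInverse

end GeneralizedInverse

/-- for a strictly concave `C¹` utility `u` whose derivative `u'` is a strictly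
decreasing bijection of `(0,∞)` onto itself (with inverse `I`), and a continuous strictly
increasing bijection `X` of `(0,∞)` onto itself with inverse `XI`, the convex conjugate of
`U(x) := ∫₀ˣ u'(XI(z)) dz` satisfies `Ũ(y) = ∫_y^∞ X(I(z)) dz = ∫_y^∞ X(−ũ'(z)) dz`, since
`I = (u')⁻¹ = −ũ'` where `ũ` is the conjugate of `u`. -/
theorem statement12 (u ux I X XI : ℝ → ℝ)
    -- `u` strictly concave, continuously differentiable with derivative `ux = u'`
    (huconc : StrictConcaveOn ℝ (Ioi 0) u)
    (hux : ∀ x ∈ Ioi (0:ℝ), HasDerivAt u (ux x) x) (huxcont : ContinuousOn ux (Ioi 0))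
    -- `u'` is a strictly decreasing bijection of `(0,∞)` onto itself, with inverse `I`
    (huxanti : StrictAntiOn ux (Ioi 0)) (huxbij : BijOn ux (Ioi 0) (Ioi 0))
    (hImaps : MapsTo I (Ioi 0) (Ioi 0))
    (hIleft : ∀ x ∈ Ioi (0:ℝ), I (ux x) = x) (hIright : ∀ y ∈ Ioi (0:ℝ), ux (I y) = y)
    -- `X` is a continuous strictly increasing bijection of `(0,∞)` onto itself, inverse `XI`
    (hXcont : ContinuousOn X (Ioi 0)) (hXmono : StrictMonoOn X (Ioi 0))
    (hXbij : BijOn X (Ioi 0) (Ioi 0))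
    (hXImaps : MapsTo XI (Ioi 0) (Ioi 0))
    (hXIleft : ∀ x ∈ Ioi (0:ℝ), XI (X x) = x) (hXIright : ∀ z ∈ Ioi (0:ℝ), X (XI z) = z)
    -- `U(x) := ∫₀ˣ u'(XI(z)) dz` is finite for all `x > 0`
    (hUfin : ∀ x ∈ Ioi (0:ℝ), MeasureTheory.IntegrableOn (fun z => ux (XI z)) (Ioc 0 x))
    -- `z ↦ X((u')⁻¹(z))` is integrable on `(y,∞)` for each `y > 0`
    (hint : ∀ y ∈ Ioi (0:ℝ), MeasureTheory.IntegrableOn (fun z => X (I z)) (Ioi y)) :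
    ∀ y ∈ Ioi (0:ℝ),
      -- `Ũ(y) = ∫_y^∞ X(I(z)) dz`
      sSup ((fun x => (∫ z in Ioc (0:ℝ) x, ux (XI z)) - x * y) '' Ioi 0)
        = (∫ z in Ioi y, X (I z)) ∧
      -- and `I(z) = (u')⁻¹(z) = −ũ'(z)`, i.e. the conjugate `ũ` of `u` has derivative `−I`
      HasDerivAt (fun y' => sSup ((fun x => u x - x * y') '' Ioi 0)) (-(I y)) y := by
  intro y hy
  have hinverse : IsGeneralizedInverse (fun z => ux (XI z)) (fun z => X (I z)) :=
    (IsGeneralizedInverse.of_strictAntiOn huxanti hImaps hIright).comp_strictMonoOn hImaps hXmono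
      hXImaps hXIright
  exact ⟨hinverse.convexConjugateOn_setIntegral (hXbij.mapsTo.comp hImaps) hUfin hy,
    hasDerivAt_convexConjugateOn_of_invOn isOpen_Ioi isOpen_Ioi huconc.concaveOn hux
      huxanti.antitoneOn huxbij.mapsTo hImaps ⟨hIleft, hIright⟩ hy⟩
end
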